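/- arXiv:1405.4324 — 2 statements merged into one kernel-verified Lean document; each statement's English description precedes it below -/
import Mathlib

section
/- Let S ⊊ V with S^c nonempty and let k be a positive integer. Define Ω_k(S) as the k-th root of the smallest eigenvalue of the principal submatrix (𝓛^k)_{S^c} of 𝓛^k indexed by S^c. Then Ω_k(S) ≤ ω_c(S), where ω_c(S) = inf{ω(φ) : φ ∈ L2(S^c), φ ≠ 0}; i.e., the estimated cut-off frequency never exceeds the true cut-off frequency. -/
/-!
If `φ` vanishes on `S`, the quadratic form of `𝓛^k` at `φ` equals that of `(𝓛^k)_{Sᶜ}` at the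
restriction of `φ`, so it is at least `μ ‖φ‖²`. Expanding `φ` in the eigenvectors of `𝓛`, only
frequencies up to `ω(φ)` occur, so it is also at most `ω(φ)^k ‖φ‖²`. Hence `μ ≤ ω(φ)^k`.
-/

open Matrix

noncomputable section

/-- The bandwidth `ω(φ)` of a signal `φ`: the largest eigenvalue `lam i` such that the
component of `φ` along the eigenvector `u i` is nonzero. -/
def bandwidth {N : ℕ} (lam : Fin N → ℝ) (u : Fin N → Fin N → ℝ) (φ : Fin N → ℝ) : ℝ :=
  sSup {r : ℝ | ∃ i, r = lam i ∧ φ ⬝ᵥ u i ≠ 0}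

/-- The cut-off frequency `ω_c(S)`: the infimum (in `EReal`, so `⊤` if the set is empty) of the
bandwidths of nonzero signals vanishing on `S`. -/
def cutoffFreq {N : ℕ} (lam : Fin N → ℝ) (u : Fin N → Fin N → ℝ) (S : Finset (Fin N)) : EReal :=
  sInf {r : EReal |
    ∃ φ : Fin N → ℝ, φ ≠ 0 ∧ (∀ i ∈ S, φ i = 0) ∧ r = ((bandwidth lam u φ : ℝ) : EReal)}

section LowerBound

variable {m n 𝕜 : Type*} [Fintype m] [Fintype n]

theorem setOf_exists_mulVec_eq_smul_eq_spectrum [DecidableEq n] [Field 𝕜] (A : Matrix n n 𝕜) :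
    {t : 𝕜 | ∃ v : n → 𝕜, v ≠ 0 ∧ A *ᵥ v = t • v} = spectrum 𝕜 A := by
  ext t
  rw [← spectrum_toLin', ← Module.End.hasEigenvalue_iff_mem_spectrum]
  refine ⟨fun ⟨v, hv0, hv⟩ => Module.End.hasEigenvalue_of_hasEigenvector (x := v) ?_, fun h => ?_⟩
  · exact Module.End.hasEigenvector_iff.mpr ⟨Module.End.mem_eigenspace_iff.mpr hv, hv0⟩
  · obtain ⟨v, hv⟩ := h.exists_hasEigenvector
    exact ⟨v, hv.2, hv.apply_eq_smul⟩

open scoped ComplexOrder MatrixOrder in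
theorem mul_star_dotProduct_le_of_mem_lowerBounds_spectrum [DecidableEq n] [RCLike 𝕜]
    {A : Matrix n n 𝕜} (hA : A.IsHermitian) {μ : ℝ} (hμ : μ ∈ lowerBounds (spectrum ℝ A))
    (x : n → 𝕜) : (μ : 𝕜) * (star x ⬝ᵥ x) ≤ star x ⬝ᵥ A *ᵥ x := by
  have hle : algebraMap ℝ (Matrix n n 𝕜) μ ≤ A :=
    (algebraMap_le_iff_le_spectrum hA).mpr fun _ ht => hμ ht
  have hquad := (le_iff.mp hle).dotProduct_mulVec_nonneg x
  rwa [Algebra.algebraMap_eq_smul_one, sub_mulVec, smul_mulVec, one_mulVec, dotProduct_sub,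
    dotProduct_smul, sub_nonneg, RCLike.real_smul_eq_coe_mul] at hquad

theorem dotProduct_comp_of_injective {R : Type*} [NonUnitalNonAssocSemiring R] {f : m → n}
    (hf : f.Injective) (x : n → R) {y : n → R} (hy : ∀ i ∉ Set.range f, y i = 0) :
    (x ∘ f) ⬝ᵥ (y ∘ f) = x ⬝ᵥ y :=
  Fintype.sum_of_injective f hf _ _ (fun i hi => by rw [hy i hi, mul_zero]) fun _ => rfl

theorem submatrix_mulVec_comp_of_injective {l o R : Type*} [NonUnitalNonAssocSemiring R]
    (A : Matrix l n R) (g : o → l) {f : m → n} (hf : f.Injective) {x : n → R}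
    (hx : ∀ i ∉ Set.range f, x i = 0) : A.submatrix g f *ᵥ (x ∘ f) = (A *ᵥ x) ∘ g :=
  funext fun i => dotProduct_comp_of_injective hf (A (g i)) hx

open scoped ComplexOrder in
theorem mul_star_dotProduct_le_of_mem_lowerBounds_spectrum_submatrix [DecidableEq m] [RCLike 𝕜]
    {A : Matrix n n 𝕜} (hA : A.IsHermitian) {f : m → n} (hf : f.Injective) {μ : ℝ}
    (hμ : μ ∈ lowerBounds (spectrum ℝ (A.submatrix f f))) {x : n → 𝕜}
    (hx : ∀ i ∉ Set.range f, x i = 0) : (μ : 𝕜) * (star x ⬝ᵥ x) ≤ star x ⬝ᵥ A *ᵥ x := by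
  have hstar : ∀ i ∉ Set.range f, star x i = 0 := fun i hi => by simp [hx i hi]
  calc (μ : 𝕜) * (star x ⬝ᵥ x) = μ * (star (x ∘ f) ⬝ᵥ (x ∘ f)) := by
        rw [← dotProduct_comp_of_injective hf (star x) hx]; rfl
    _ ≤ star (x ∘ f) ⬝ᵥ A.submatrix f f *ᵥ (x ∘ f) :=
        mul_star_dotProduct_le_of_mem_lowerBounds_spectrum (hA.submatrix f) hμ _
    _ = ((A *ᵥ x) ∘ f) ⬝ᵥ (star x ∘ f) := by
        rw [submatrix_mulVec_comp_of_injective A f hf hx, dotProduct_comm]; rfl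
    _ = star x ⬝ᵥ A *ᵥ x := by
        rw [dotProduct_comp_of_injective hf _ hstar, dotProduct_comm]

end LowerBound

section UpperBound

variable {n R : Type*} [Fintype n] [DecidableEq n]

theorem pow_mulVec_eq_pow_smul [CommSemiring R] {A : Matrix n n R} {x : n → R} {a : R}
    (h : A *ᵥ x = a • x) (k : ℕ) : A ^ k *ᵥ x = a ^ k • x := by
  induction k with
  | zero => simp
  | succ k ih => rw [pow_succ, ← mulVec_mulVec, h, mulVec_smul, ih, smul_smul, pow_succ']

theorem sum_dotProduct_smul_of_orthonormal [CommRing R] {u : n → n → R}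
    (horth : ∀ i j, u i ⬝ᵥ u j = if i = j then (1 : R) else 0) (x : n → R) :
    ∑ i, (x ⬝ᵥ u i) • u i = x := by
  have hrows : of u * (of u)ᵀ = 1 := by
    ext i j
    simpa [mul_apply, one_apply, dotProduct] using horth i j
  -- A one-sided inverse of a square matrix is two-sided: orthonormality gives completeness.
  have hcols : (of u)ᵀ * of u = 1 := mul_eq_one_comm.mp hrows
  calc ∑ i, (x ⬝ᵥ u i) • u i = (x ᵥ* (of u)ᵀ) ᵥ* of u := (vecMul_eq_sum _ _).symm
    _ = x := by rw [vecMul_vecMul, hcols, vecMul_one]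

theorem dotProduct_mulVec_eq_sum_of_orthonormal [CommRing R] {A : Matrix n n R} {u : n → n → R}
    {a : n → R} (hu : ∀ i, A *ᵥ u i = a i • u i)
    (horth : ∀ i j, u i ⬝ᵥ u j = if i = j then (1 : R) else 0) (x y : n → R) :
    x ⬝ᵥ A *ᵥ y = ∑ i, a i * ((x ⬝ᵥ u i) * (y ⬝ᵥ u i)) := by
  conv_lhs => rw [← sum_dotProduct_smul_of_orthonormal horth y]
  simp only [mulVec_sum, mulVec_smul, hu, dotProduct_sum, dotProduct_smul, smul_eq_mul]
  exact Finset.sum_congr rfl fun i _ => by ring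

theorem dotProduct_mulVec_le_of_orthonormal [CommRing R] [LinearOrder R] [IsStrictOrderedRing R]
    {A : Matrix n n R} {u : n → n → R} {a : n → R} (hu : ∀ i, A *ᵥ u i = a i • u i)
    (horth : ∀ i j, u i ⬝ᵥ u j = if i = j then (1 : R) else 0) {x : n → R} {c : R}
    (hc : ∀ i, x ⬝ᵥ u i ≠ 0 → a i ≤ c) : x ⬝ᵥ A *ᵥ x ≤ c * (x ⬝ᵥ x) := by
  have hnorm : x ⬝ᵥ x = ∑ i, (x ⬝ᵥ u i) * (x ⬝ᵥ u i) := by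
    simpa using dotProduct_mulVec_eq_sum_of_orthonormal (A := 1) (a := 1) (by simp) horth x x
  rw [dotProduct_mulVec_eq_sum_of_orthonormal hu horth, hnorm, Finset.mul_sum]
  refine Finset.sum_le_sum fun i _ => ?_
  by_cases hi : x ⬝ᵥ u i = 0
  · simp [hi]
  · exact mul_le_mul_of_nonneg_right (hc i hi) (mul_self_nonneg _)

end UpperBound

section Bandwidth

variable {N : ℕ} {lam : Fin N → ℝ} {u : Fin N → Fin N → ℝ} {φ : Fin N → ℝ}

theorem le_bandwidth {i : Fin N} (hi : φ ⬝ᵥ u i ≠ 0) : lam i ≤ bandwidth lam u φ := by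
  refine le_csSup ((Set.finite_range lam).bddAbove.mono ?_) ⟨i, rfl, hi⟩
  rintro _ ⟨j, rfl, -⟩
  exact ⟨j, rfl⟩

theorem bandwidth_nonneg (hlam : ∀ i, 0 ≤ lam i) : 0 ≤ bandwidth lam u φ := by
  refine Real.sSup_nonneg ?_
  rintro _ ⟨j, rfl, -⟩
  exact hlam j

theorem dotProduct_pow_mulVec_le_bandwidth_pow {L : Matrix (Fin N) (Fin N) ℝ}
    (hlam : ∀ i, 0 ≤ lam i) (heig : ∀ i, L *ᵥ u i = lam i • u i)
    (horth : ∀ i j, u i ⬝ᵥ u j = if i = j then (1 : ℝ) else 0) (k : ℕ) :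
    φ ⬝ᵥ L ^ k *ᵥ φ ≤ bandwidth lam u φ ^ k * (φ ⬝ᵥ φ) :=
  dotProduct_mulVec_le_of_orthonormal (fun i => pow_mulVec_eq_pow_smul (heig i) k) horth
    fun i hi => pow_le_pow_left₀ (hlam i) (le_bandwidth hi) k

end Bandwidth

/-- **The estimated cut-off frequency never exceeds the true cut-off frequency.**
If `μ` is the smallest eigenvalue of the principal submatrix `(𝓛^k)_{Sᶜ}`, then
`Ω_k(S) = μ^{1/k} ≤ ω_c(S)`. -/
theorem estimated_cutoff_le_cutoff {N : ℕ}
    (L : Matrix (Fin N) (Fin N) ℝ) (hL : L.PosSemidef)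
    (lam : Fin N → ℝ) (u : Fin N → Fin N → ℝ)
    (hlam_nonneg : ∀ i, 0 ≤ lam i) (hlam_mono : Monotone lam)
    (heig : ∀ i, L *ᵥ u i = lam i • u i)
    (horth : ∀ i j, u i ⬝ᵥ u j = if i = j then (1 : ℝ) else 0)
    (S : Finset (Fin N)) (hS : (Sᶜ : Finset (Fin N)).Nonempty)
    (k : ℕ) (hk : 0 < k)
    (μ : ℝ)
    (hμ : IsLeast {t : ℝ | ∃ v : {i // i ∈ Sᶜ} → ℝ, v ≠ 0 ∧
        ((L ^ k).submatrix (Subtype.val : {i // i ∈ Sᶜ} → Fin N) Subtype.val) *ᵥ v = t • v} μ) :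
    ((μ ^ ((1 : ℝ) / k) : ℝ) : EReal) ≤ cutoffFreq lam u S := by
  rw [setOf_exists_mulVec_eq_smul_eq_spectrum] at hμ
  have hLk : (L ^ k).PosSemidef := hL.pow k
  have hμ_nonneg : 0 ≤ μ :=
    (posSemidef_iff_isHermitian_and_spectrum_nonneg.mp (hLk.submatrix _)).2 hμ.1
  refine le_sInf ?_
  rintro _ ⟨φ, hφ, hφS, rfl⟩
  have hsupp : ∀ i ∉ Set.range (Subtype.val : {i // i ∈ Sᶜ} → Fin N), φ i = 0 :=
    fun i hi => hφS i (by simpa using hi)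
  have hlower : μ * (φ ⬝ᵥ φ) ≤ φ ⬝ᵥ L ^ k *ᵥ φ := by
    simpa using mul_star_dotProduct_le_of_mem_lowerBounds_spectrum_submatrix hLk.isHermitian
      Subtype.val_injective hμ.2 hsupp
  have hupper := dotProduct_pow_mulVec_le_bandwidth_pow (φ := φ) hlam_nonneg heig horth k
  have hφ_pos : 0 < φ ⬝ᵥ φ := by simpa using dotProduct_star_self_pos_iff.mpr hφ
  have hμ_le : μ ≤ bandwidth lam u φ ^ k := le_of_mul_le_mul_right (hlower.trans hupper) hφ_pos
  rw [EReal.coe_le_coe_iff, one_div]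
  calc μ ^ (k : ℝ)⁻¹ ≤ (bandwidth lam u φ ^ k) ^ (k : ℝ)⁻¹ :=
        Real.rpow_le_rpow hμ_nonneg hμ_le (by positivity)
    _ = bandwidth lam u φ := Real.pow_rpow_inv_natCast (bandwidth_nonneg hlam_nonneg) hk.ne'

end
end

section
/- Let S ⊆ V and ω ≥ 0 with ω < ω_c(S) = inf{ω(φ) : φ ∈ L2(S^c), φ ≠ 0}. Let K = {i : λ_i ≤ ω} and let U_{S,K} be the |S|×|K| matrix whose columns are the eigenvectors u_i, i ∈ K, restricted to the rows indexed by S. Then (i) U_{S,K} has trivial kernel (full column rank), and (ii) for every f ∈ PW_ω(G) there is a unique coefficient vector α with U_{S,K}α = f(S), and this α satisfies f = Σ_{i∈K} α_i u_i; i.e., f is exactly recovered from its samples on S by least squares. -/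
open Matrix

noncomputable section

/-- The Paley–Wiener space `PW_ω(G)`: the span of the eigenvectors with eigenvalue at most `ω`. -/
def PW {N : ℕ} (lam : Fin N → ℝ) (u : Fin N → Fin N → ℝ) (ω : ℝ) :
    Submodule ℝ (Fin N → ℝ) :=
  Submodule.span ℝ (u '' {i | lam i ≤ ω})

/-!
A nonzero signal in `PW_ω` is orthogonal to every eigenvector of frequency above `ω`, so its
bandwidth is at most `ω < ω_c(S)` and it cannot vanish on `S`: two signals of `PW_ω` that agree on
`S` are equal. Since `U_{S,K} α` is the restriction to `S` of `Σ α_i u_i ∈ PW_ω`, the map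
`α ↦ U_{S,K} α` is the composite of two injections, synthesis followed by restriction.
-/

section SamplingMatrix

variable {R ι κ : Type*}

/-- `S` is a uniqueness set for the space of signals `W`: a signal in `W` is determined by its
samples on `S`. -/
def IsUniquenessSet [Semiring R] (S : Finset ι) (W : Submodule R (ι → R)) : Prop :=
  Set.InjOn S.restrict (W : Set (ι → R))

/-- The matrix `U_{S,K}` of a family `v` indexed by `κ = K`: its columns are the vectors `v j`, its
rows are restricted to `S`. -/
def samplingMatrix (v : κ → ι → R) (S : Finset ι) : Matrix S κ R :=
  Matrix.of fun s j => v j s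

variable [CommSemiring R] [Fintype κ] {v : κ → ι → R} {S : Finset ι}

theorem samplingMatrix_mulVec (v : κ → ι → R) (S : Finset ι) (α : κ → R) :
    samplingMatrix v S *ᵥ α = S.restrict (∑ j, α j • v j) := by
  ext s
  simp [samplingMatrix, mulVec, dotProduct, Finset.sum_apply, mul_comm]

namespace IsUniquenessSet

theorem injective_samplingMatrix_mulVec
    (hS : IsUniquenessSet S (Submodule.span R (Set.range v))) (hv : LinearIndependent R v) :
    Function.Injective (samplingMatrix v S).mulVec := by
  intro α β hαβ
  rw [samplingMatrix_mulVec, samplingMatrix_mulVec] at hαβ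
  refine linearIndependent_iff_injective_fintypeLinearCombination.mp hv (hS ?_ ?_ hαβ) <;>
    exact (Submodule.mem_span_range_iff_exists_fun R).mpr ⟨_, rfl⟩

theorem eq_sum_of_samplingMatrix_mulVec_eq
    (hS : IsUniquenessSet S (Submodule.span R (Set.range v))) {f : ι → R}
    (hf : f ∈ Submodule.span R (Set.range v)) {α : κ → R}
    (hα : samplingMatrix v S *ᵥ α = S.restrict f) : f = ∑ j, α j • v j :=
  hS hf ((Submodule.mem_span_range_iff_exists_fun R).mpr ⟨α, rfl⟩)
    (hα.symm.trans (samplingMatrix_mulVec v S α))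

theorem existsUnique_samplingMatrix_mulVec_eq
    (hS : IsUniquenessSet S (Submodule.span R (Set.range v))) (hv : LinearIndependent R v)
    {f : ι → R} (hf : f ∈ Submodule.span R (Set.range v)) :
    ∃! α, samplingMatrix v S *ᵥ α = S.restrict f := by
  obtain ⟨β, rfl⟩ := (Submodule.mem_span_range_iff_exists_fun R).mp hf
  have hβ := samplingMatrix_mulVec v S β
  exact ⟨β, hβ, fun α hα => hS.injective_samplingMatrix_mulVec hv (hα.trans hβ.symm)⟩

end IsUniquenessSet

end SamplingMatrix

section DotProduct

variable {R ι κ : Type*} [Fintype ι]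

theorem dotProduct_eq_zero_of_mem_span [CommSemiring R] {s : Set (ι → R)} {x y : ι → R}
    (hx : x ∈ Submodule.span R s) (hy : ∀ z ∈ s, z ⬝ᵥ y = 0) : x ⬝ᵥ y = 0 :=
  (Submodule.span_le (p := LinearMap.ker ((dotProductBilin R R).flip y))).mpr hy hx

theorem linearIndependent_of_dotProduct_eq_ite [CommRing R] [DecidableEq κ] {v : κ → ι → R}
    (hv : ∀ i j, v i ⬝ᵥ v j = if i = j then 1 else 0) : LinearIndependent R v :=
  .of_pairwise_dual_eq_zero_one v (fun i => dotProductBilin R R (v i))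
    (fun i j hij => (hv i j).trans (if_neg hij)) (fun i => (hv i i).trans (if_pos rfl))

end DotProduct

section PaleyWiener

variable {N : ℕ} {lam : Fin N → ℝ} {u : Fin N → Fin N → ℝ} {S : Finset (Fin N)} {ω : ℝ}

theorem PW_eq_span_range (lam : Fin N → ℝ) (u : Fin N → Fin N → ℝ) (ω : ℝ) :
    PW lam u ω = Submodule.span ℝ (Set.range fun j : {i // lam i ≤ ω} => u j) := by
  rw [PW, Set.image_eq_range]
  rfl

theorem bandwidth_le_of_mem_PW (hperp : ∀ i j, lam i ≤ ω → ω < lam j → u i ⬝ᵥ u j = 0)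
    {φ : Fin N → ℝ} (hφ : φ ∈ PW lam u ω) (hφ₀ : φ ≠ 0) : bandwidth lam u φ ≤ ω := by
  -- A signal of `PW` orthogonal to all `u i` is orthogonal to itself.
  have hcomponent : ∃ i, φ ⬝ᵥ u i ≠ 0 := by
    by_contra! horth
    refine hφ₀ (dotProduct_self_eq_zero.mp (dotProduct_eq_zero_of_mem_span hφ ?_))
    rintro _ ⟨i, -, rfl⟩
    rw [dotProduct_comm, horth i]
  obtain ⟨k, hk⟩ := hcomponent
  refine csSup_le ⟨lam k, k, rfl, hk⟩ ?_
  rintro _ ⟨i, rfl, hi⟩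
  by_contra! hlt
  refine hi (dotProduct_eq_zero_of_mem_span hφ ?_)
  rintro _ ⟨j, hj, rfl⟩
  exact hperp j i hj hlt

theorem cutoffFreq_le_bandwidth {φ : Fin N → ℝ} (hφ₀ : φ ≠ 0) (hφS : ∀ i ∈ S, φ i = 0) :
    cutoffFreq lam u S ≤ bandwidth lam u φ :=
  sInf_le ⟨φ, hφ₀, hφS, rfl⟩

theorem isUniquenessSet_PW_of_lt_cutoffFreq
    (hperp : ∀ i j, lam i ≤ ω → ω < lam j → u i ⬝ᵥ u j = 0) (hcut : ω < cutoffFreq lam u S) :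
    IsUniquenessSet S (PW lam u ω) := by
  intro f hf g hg hfg
  by_contra hne
  have hvanish : ∀ i ∈ S, (f - g) i = 0 := fun i hi => sub_eq_zero.mpr (congrFun hfg ⟨i, hi⟩)
  have hband : bandwidth lam u (f - g) ≤ ω :=
    bandwidth_le_of_mem_PW hperp (sub_mem hf hg) (sub_ne_zero.mpr hne)
  refine hcut.not_ge ?_
  calc cutoffFreq lam u S ≤ bandwidth lam u (f - g) :=
        cutoffFreq_le_bandwidth (sub_ne_zero.mpr hne) hvanish
    _ ≤ ω := EReal.coe_le_coe_iff.mpr hband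

/-- `hperp` holds for eigenvectors `u i` of a symmetric matrix with eigenvalues `lam i`, whatever
the basis chosen inside each eigenspace. -/
theorem least_squares_recovery_general (hu : LinearIndependent ℝ u)
    (hperp : ∀ i j, lam i ≠ lam j → u i ⬝ᵥ u j = 0) (hcut : ω < cutoffFreq lam u S) :
    (∀ α, samplingMatrix (fun j : {i // lam i ≤ ω} => u j) S *ᵥ α = 0 → α = 0) ∧
    ∀ f ∈ PW lam u ω,
      (∃! α, samplingMatrix (fun j : {i // lam i ≤ ω} => u j) S *ᵥ α = S.restrict f) ∧
      ∀ α, samplingMatrix (fun j : {i // lam i ≤ ω} => u j) S *ᵥ α = S.restrict f →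
        f = ∑ j, α j • u j.1 := by
  have hS : IsUniquenessSet S (PW lam u ω) :=
    isUniquenessSet_PW_of_lt_cutoffFreq (fun i j hi hj => hperp i j (hi.trans_lt hj).ne) hcut
  have huK : LinearIndependent ℝ fun j : {i // lam i ≤ ω} => u j :=
    hu.comp _ Subtype.val_injective
  rw [PW_eq_span_range] at hS ⊢
  refine ⟨fun α hα => ?_, fun f hf => ⟨?_, fun α hα => ?_⟩⟩
  · exact hS.injective_samplingMatrix_mulVec huK (hα.trans (mulVec_zero _).symm)
  · exact hS.existsUnique_samplingMatrix_mulVec_eq huK hf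
  · exact hS.eq_sum_of_samplingMatrix_mulVec_eq hf hα

end PaleyWiener

/-- **Exact recovery by least squares.** If `ω < ω_c(S)` then (i) the matrix `U_{S,K}` (columns:
eigenvectors with `λ_i ≤ ω`, rows restricted to `S`) has trivial kernel, and (ii) every
`f ∈ PW_ω(G)` admits a unique coefficient vector `α` with `U_{S,K} α = f(S)`, and any such `α`
reconstructs `f` as `f = Σ_{i ∈ K} α_i u_i`. -/
theorem least_squares_recovery {N : ℕ}
    (L : Matrix (Fin N) (Fin N) ℝ) (hsymm : L.IsSymm)
    (lam : Fin N → ℝ) (u : Fin N → Fin N → ℝ)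
    (hlam_nonneg : ∀ i, 0 ≤ lam i) (hlam_mono : Monotone lam)
    (heig : ∀ i, L *ᵥ u i = lam i • u i)
    (horth : ∀ i j, u i ⬝ᵥ u j = if i = j then (1 : ℝ) else 0)
    (S : Finset (Fin N)) (ω : ℝ) (hω : 0 ≤ ω)
    (hcut : (ω : EReal) < cutoffFreq lam u S) :
    (∀ α : {i : Fin N // lam i ≤ ω} → ℝ,
        (Matrix.of fun (s : {a // a ∈ S}) (j : {i : Fin N // lam i ≤ ω}) => u j.1 s.1) *ᵥ α = 0 →
        α = 0) ∧
    ∀ f ∈ PW lam u ω,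
      (∃! α : {i : Fin N // lam i ≤ ω} → ℝ,
        (Matrix.of fun (s : {a // a ∈ S}) (j : {i : Fin N // lam i ≤ ω}) => u j.1 s.1) *ᵥ α =
          fun s => f s.1) ∧
      (∀ α : {i : Fin N // lam i ≤ ω} → ℝ,
        ((Matrix.of fun (s : {a // a ∈ S}) (j : {i : Fin N // lam i ≤ ω}) => u j.1 s.1) *ᵥ α =
          fun s => f s.1) →
        f = ∑ j : {i : Fin N // lam i ≤ ω}, α j • u j.1) :=
  least_squares_recovery_general (linearIndependent_of_dotProduct_eq_ite horth)
    (fun i j hij => (horth i j).trans (if_neg (ne_of_apply_ne lam hij))) hcut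

end
end
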